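/- arXiv:2307.00942 — 7 statements merged into one kernel-verified Lean document; each statement's English description precedes it below -/
import Mathlib

section
/- Let K ≥ 0, B > 0, and let g : ℝ → ℝ be (K,B)-convex (i). Suppose there exist x₀ ∈ ℝ and a with 0 < a ≤ B such that K + g(x₀ + a) − g(x₀) ≤ 0 (it is optimal to place an order of a units at inventory level x₀). Then g is nonincreasing on (−∞, x₀], i.e., g(u) ≥ g(w) whenever u ≤ w ≤ x₀. -/
/-!
Ordering at `x₀` makes the forward quotient in the convexity inequality at `x = x₀` nonpositive, so
every backward difference quotient of `g` at a point `y ≤ x₀` with step in `(0, B]` is nonpositive.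
Thus `g` does not increase over distances at most `B` below `x₀`, and since `ℝ` is Archimedean any
distance is covered by finitely many such steps.
-/

/-- `(K,B)`-convexity (i): for all `y ≤ x`, `0 < a ≤ B`, `0 < b ≤ B`,
`(K + g(x+a) − g(x))/a ≥ (g(y) − g(y−b))/b`. -/
def KBConvexI (K B : ℝ) (g : ℝ → ℝ) : Prop :=
  ∀ x y a b : ℝ, y ≤ x → 0 < a → a ≤ B → 0 < b → b ≤ B →
    (g y - g (y - b)) / b ≤ (K + g (x + a) - g x) / a

theorem antitoneOn_of_forall_sub_le {G α : Type*} [AddCommGroup G] [LinearOrder G]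
    [IsOrderedAddMonoid G] [Archimedean G] [Preorder α] {f : G → α} {s : Set G} {δ : G}
    (hs : s.OrdConnected) (hδ : 0 < δ)
    (hstep : ∀ ⦃x⦄, x ∈ s → ∀ ⦃y⦄, y ∈ s → x < y → y - x ≤ δ → f y ≤ f x) :
    AntitoneOn f s := by
  intro x hx y hy hxy
  obtain ⟨n, hn⟩ := Archimedean.arch (y - x) hδ
  induction n generalizing y with
  | zero =>
    have hyx : y = x := le_antisymm (by simpa only [zero_nsmul, sub_nonpos] using hn) hxy
    exact hyx ▸ le_rfl
  | succ n ih =>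
    rcases hxy.eq_or_lt with rfl | hlt
    · exact le_rfl
    rcases le_total (y - x) δ with hshort | hlong
    · exact hstep hx hy hlt hshort
    · have hxz : x ≤ y - δ := le_sub_comm.mp hlong
      have hz : y - δ ∈ s := hs.out hx hy ⟨hxz, sub_le_self y hδ.le⟩
      have hzn : y - δ - x ≤ n • δ := by
        rwa [sub_right_comm, sub_le_iff_le_add, ← succ_nsmul]
      calc f y ≤ f (y - δ) := hstep hz hy (sub_lt_self y hδ) (sub_sub_cancel y δ).le
        _ ≤ f x := ih hz hxz hzn

theorem KBConvexI.backward_quotient_nonpos {K B : ℝ} {g : ℝ → ℝ} (hg : KBConvexI K B g)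
    {x a y b : ℝ} (ha : 0 < a) (haB : a ≤ B) (hord : K + g (x + a) - g x ≤ 0)
    (hyx : y ≤ x) (hb : 0 < b) (hbB : b ≤ B) :
    (g y - g (y - b)) / b ≤ 0 :=
  (hg x y a b hyx ha haB hb hbB).trans (div_nonpos_of_nonpos_of_nonneg hord ha.le)

/-- If `g` is `(K,B)`-convex (i) and it is optimal to place an order of `a ∈ (0,B]` units at
inventory level `x₀` (i.e. `K + g(x₀+a) − g(x₀) ≤ 0`), then `g` is nonincreasing on
`(−∞, x₀]`. -/
theorem nonincreasing_on_ordering_region (K B : ℝ) (hK : 0 ≤ K) (hB : 0 < B)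
    (g : ℝ → ℝ) (hgi : KBConvexI K B g)
    (x₀ a : ℝ) (ha : 0 < a) (haB : a ≤ B)
    (hord : K + g (x₀ + a) - g x₀ ≤ 0) :
    ∀ u w : ℝ, u ≤ w → w ≤ x₀ → g w ≤ g u := by
  have hanti : AntitoneOn g (Set.Iic x₀) := by
    refine antitoneOn_of_forall_sub_le Set.ordConnected_Iic hB fun u _ w hw huw hwuB => ?_
    have hpos : 0 < w - u := sub_pos.mpr huw
    have hquot : (g w - g u) / (w - u) ≤ 0 := by
      simpa only [sub_sub_cancel] using
        hgi.backward_quotient_nonpos ha haB hord hw hpos hwuB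
    simpa only [div_le_iff₀ hpos, zero_mul, sub_nonpos] using hquot
  exact fun u w huw hw => hanti (huw.trans hw) hw huw
end

section
/- Let K ≥ 0, B > 0, and let g : ℝ → ℝ be (K,B)-convex (i) with g(x) → +∞ as x → +∞. Then the set { x ∈ ℝ : there exists a with 0 < a ≤ B and K + g(x + a) − g(x) ≤ 0 } of inventory levels at which it is optimal to place an order is bounded above. (Hence there is a maximum inventory level s_m beyond which no ordering is optimal.) -/
open Filter Set

theorem antitoneOn_of_forall_le_add {α β : Type*} [AddCommGroup α] [LinearOrder α]
    [IsOrderedAddMonoid α] [Archimedean α] [Preorder β] {f : α → β} {s : Set α}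
    (hs : s.OrdConnected) {B : α} (hB : 0 < B)
    (hf : ∀ y ∈ s, ∀ z ∈ s, y < z → z ≤ y + B → f z ≤ f y) :
    AntitoneOn f s := by
  have chain (n : ℕ) : ∀ y ∈ s, ∀ z ∈ s, y ≤ z → z ≤ y + n • B → f z ≤ f y := by
    intro y hy
    induction n with
    | zero =>
      intro z _ hyz hzy
      rw [zero_nsmul, add_zero] at hzy
      rw [hyz.antisymm hzy]
    | succ n ih =>
      intro z hz hyz hzy
      rcases le_or_gt z (y + n • B) with hzn | hzn
      · exact ih z hz hyz hzn
      · have hyw : y ≤ y + n • B := le_add_of_nonneg_right (nsmul_nonneg hB.le n)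
        have hw : y + n • B ∈ s := hs.out hy hz ⟨hyw, hzn.le⟩
        rw [succ_nsmul, ← add_assoc] at hzy
        exact (hf _ hw z hz hzn hzy).trans (ih _ hw hyw le_rfl)
  intro y hy z hz hyz
  obtain ⟨n, hn⟩ := Archimedean.arch (z - y) hB
  exact chain n y hy z hz hyz (sub_le_iff_le_add'.mp hn)

theorem not_antitone_of_tendsto_atTop_atTop {α β : Type*} [Preorder α] [IsDirectedOrder α]
    [Nonempty α] [Preorder β] [NoMaxOrder β] {f : α → β} (hf : Tendsto f atTop atTop) :
    ¬Antitone f := by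
  intro hanti
  obtain ⟨x₀⟩ := ‹Nonempty α›
  obtain ⟨x, hlt, hle⟩ := ((hf.eventually_gt_atTop (f x₀)).and (eventually_ge_atTop x₀)).exists
  exact hlt.not_ge (hanti hle)

/-- The set of inventory levels at which it is optimal to place an order, for ordering cost `K`,
order capacity `B` and cost function `g`. The order quantity must be positive: with `a = 0` allowed,
every level would qualify when `K = 0`. -/
def orderingSet (K B : ℝ) (g : ℝ → ℝ) : Set ℝ :=
  {x | ∃ a : ℝ, 0 < a ∧ a ≤ B ∧ K + g (x + a) - g x ≤ 0}

namespace KBConvexI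

variable {K B : ℝ} {g : ℝ → ℝ}

theorem le_of_mem_orderingSet (hg : KBConvexI K B g) {x y z : ℝ} (hx : x ∈ orderingSet K B g)
    (hzx : z ≤ x) (hyz : y < z) (hzy : z ≤ y + B) : g z ≤ g y := by
  obtain ⟨a, ha, haB, hcost⟩ := hx
  have hstep : 0 < z - y := sub_pos.mpr hyz
  have hslope : (g z - g y) / (z - y) ≤ 0 :=
    calc (g z - g y) / (z - y) = (g z - g (z - (z - y))) / (z - y) := by rw [sub_sub_cancel]
      _ ≤ (K + g (x + a) - g x) / a :=
        hg x z a (z - y) hzx ha haB hstep (sub_le_iff_le_add'.mpr hzy)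
      _ ≤ 0 := div_nonpos_of_nonpos_of_nonneg hcost ha.le
  rwa [div_le_iff₀ hstep, zero_mul, sub_nonpos] at hslope

theorem antitoneOn_Iic_of_mem_orderingSet (hg : KBConvexI K B g) {x : ℝ}
    (hx : x ∈ orderingSet K B g) : AntitoneOn g (Iic x) := by
  have hB : 0 < B := let ⟨_, ha, haB, _⟩ := hx; ha.trans_le haB
  exact antitoneOn_of_forall_le_add ordConnected_Iic hB fun _ _ _ hz ↦
    hg.le_of_mem_orderingSet hx hz

end KBConvexI

theorem ordering_set_bddAbove_general {K B : ℝ} {g : ℝ → ℝ} (hg : KBConvexI K B g)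
    (hanti : ¬Antitone g) : BddAbove (orderingSet K B g) := by
  obtain ⟨y, z, hyz, hlt⟩ : ∃ y z, y ≤ z ∧ g y < g z := by
    simpa [Antitone] using hanti
  refine ⟨z, fun x hx ↦ le_of_not_ge fun hzx ↦ ?_⟩
  exact hlt.not_ge (hg.antitoneOn_Iic_of_mem_orderingSet hx (hyz.trans hzx) hzx hyz)

/-- If `g` is `(K,B)`-convex (i) and `g → +∞` at `+∞`, then the set of inventory levels at
which it is optimal to place an order (i.e. `K + g(x+a) − g(x) ≤ 0` for some
`a ∈ (0,B]`) is bounded above. -/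
theorem ordering_set_bddAbove (K B : ℝ) (hK : 0 ≤ K) (hB : 0 < B)
    (g : ℝ → ℝ) (hgi : KBConvexI K B g)
    (hcoer : Filter.Tendsto g Filter.atTop Filter.atTop) :
    BddAbove {x : ℝ | ∃ a : ℝ, 0 < a ∧ a ≤ B ∧ K + g (x + a) - g x ≤ 0} :=
  ordering_set_bddAbove_general hgi (not_antitone_of_tendsto_atTop_atTop hcoer)
end

section
/- Let K ≥ 0, B > 0 and let g : ℝ → ℝ be continuous. Let s_m ∈ ℝ be such that: g is nonincreasing on (−∞, s_m]; K + inf_{y ∈ [s_m, s_m+B]} g(y) − g(s_m) ≤ 0; and K + inf_{y ∈ [x, x+B]} g(y) − g(x) > 0 for every x > s_m. Let S_m ∈ [s_m, s_m + B] be a point attaining the infimum of g over [s_m, s_m + B]. Then: (a) if S* is any global minimizer of g with S* ≥ s_m, the least point of [s_m, s_m+B] attaining the infimum of g over [s_m, s_m+B] is ≤ S*; (b) g(S_m) ≤ g(x) for every x < S_m; (c) g(s_m) > g(x) for every x with s_m < x ≤ S_m. -/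
/-!
Since `Sm` minimises `g` over `[sm, sm + B]`, the optimality of ordering at `sm` reads
`K + g Sm ≤ g sm`. For `sm < x ≤ Sm` the level `Sm` is still reachable from `x`, so the
non-optimality of ordering at `x` gives `g x < K + g Sm ≤ g sm`, which is (c). For (b), the value
at `sm` bounds `g` from below to the left of `sm`, so a minimiser over `[sm, sm + B]` is one over
`(-∞, sm + B]`. For (a), a minimiser of `g` over `[sm, ∞)` either lies in `[sm, sm + B]`, where it
is one of the minimisers over that interval, or lies to the right of all of them.
-/

open Set

section Minimizers

variable {α β : Type*} {f : α → β} {a b m : α}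

theorem isMinOn_Iic_of_antitoneOn_of_isMinOn_Icc [LinearOrder α] [Preorder β]
    (hf : AntitoneOn f (Iic a)) (hab : a ≤ b) (hmin : IsMinOn f (Icc a b) m) :
    IsMinOn f (Iic b) m := by
  intro x hxb
  rcases le_total a x with hax | hxa
  · exact hmin ⟨hax, hxb⟩
  · exact (hmin (left_mem_Icc.2 hab)).trans (hf hxa self_mem_Iic hxa)

theorem csInf_isMinOn_Icc_le_of_isMinOn_Ici [ConditionallyCompleteLinearOrder α] [Preorder β]
    {s : α} (hm : m ∈ Icc a b) (hmin : IsMinOn f (Icc a b) m)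
    (has : a ≤ s) (hs : IsMinOn f (Ici a) s) :
    sInf {y | y ∈ Icc a b ∧ IsMinOn f (Icc a b) y} ≤ s := by
  have hbdd : BddBelow {y | y ∈ Icc a b ∧ IsMinOn f (Icc a b) y} := ⟨a, fun _ hy => hy.1.1⟩
  rcases le_total s b with hsb | hbs
  · exact csInf_le hbdd ⟨⟨has, hsb⟩, hs.on_subset Icc_subset_Ici_self⟩
  · exact (csInf_le hbdd ⟨hm, hmin⟩).trans (hm.2.trans hbs)

end Minimizers

section OrderingGap

variable {α β : Type*} [Preorder α] [Add α]
  [AddCommGroup β] [ConditionallyCompleteLinearOrder β]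
  {K : β} {B s x S : α} {g : α → β}

/-- The quantity `Δ(x)` of the capacitated inventory problem: the best cost attainable by paying
the fixed cost `K` and ordering at most `B` from inventory level `x`, minus the cost `g x` of not
ordering. Ordering is optimal at `x` iff it is nonpositive. The infimum is Mathlib's `sInf`, hence
meaningful only where `g` is bounded below on `[x, x + B]`. -/
def orderingGap (K : β) (B : α) (g : α → β) (x : α) : β :=
  K + sInf (g '' Icc x (x + B)) - g x

theorem orderingGap_eq_of_isMinOn (hS : S ∈ Icc x (x + B)) (hmin : IsMinOn g (Icc x (x + B)) S) :
    orderingGap K B g x = K + g S - g x := by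
  rw [orderingGap, sInf_image', hmin.iInf_eq hS]

variable [IsOrderedAddMonoid β]

theorem orderingGap_le (hbdd : BddBelow (g '' Icc x (x + B))) (hS : S ∈ Icc x (x + B)) :
    orderingGap K B g x ≤ K + g S - g x := by
  unfold orderingGap
  gcongr
  exact csInf_le hbdd (mem_image_of_mem g hS)

theorem lt_of_orderingGap_nonpos_of_orderingGap_pos [AddRightMono α]
    (hS : S ∈ Icc s (s + B)) (hmin : IsMinOn g (Icc s (s + B)) S) (hs : orderingGap K B g s ≤ 0)
    (hsx : s ≤ x) (hxS : x ≤ S) (hbdd : BddBelow (g '' Icc x (x + B)))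
    (hx : 0 < orderingGap K B g x) : g x < g s := by
  have reachable : S ∈ Icc x (x + B) := ⟨hxS, hS.2.trans (by gcongr)⟩
  calc
    g x < K + g S := sub_pos.1 (hx.trans_le (orderingGap_le hbdd reachable))
    _ ≤ g s := sub_nonpos.1 ((orderingGap_eq_of_isMinOn hS hmin).symm.trans_le hs)

end OrderingGap

theorem sm_Sm_properties_general {α β : Type*}
    [ConditionallyCompleteLinearOrder α] [Add α] [AddRightMono α]
    [AddCommGroup β] [ConditionallyCompleteLinearOrder β] [IsOrderedAddMonoid β]
    {K : β} {B sm Sm : α} {g : α → β}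
    (hbdd : ∀ x, sm < x → BddBelow (g '' Icc x (x + B)))
    (hmono : AntitoneOn g (Iic sm))
    (horder : orderingGap K B g sm ≤ 0)
    (hnoorder : ∀ x, sm < x → 0 < orderingGap K B g x)
    (hSm : Sm ∈ Icc sm (sm + B)) (hSmin : IsMinOn g (Icc sm (sm + B)) Sm) :
    (∀ Sstar, IsMinOn g (Ici sm) Sstar → sm ≤ Sstar →
      sInf {y | y ∈ Icc sm (sm + B) ∧ IsMinOn g (Icc sm (sm + B)) y} ≤ Sstar) ∧
    IsMinOn g (Iic (sm + B)) Sm ∧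
    (∀ x, sm < x → x ≤ Sm → g x < g sm) :=
  ⟨fun _ hmin hge => csInf_isMinOn_Icc_le_of_isMinOn_Ici hSm hSmin hge hmin,
    isMinOn_Iic_of_antitoneOn_of_isMinOn_Icc hmono (hSm.1.trans hSm.2) hSmin,
    fun x hx hxS => lt_of_orderingGap_nonpos_of_orderingGap_pos hSm hSmin horder hx.le hxS
      (hbdd x hx) (hnoorder x hx)⟩

/-- Properties of the largest reorder point `s_m` and associated order-up-to level `S_m`:
with `g` continuous, nonincreasing on `(−∞, s_m]`, ordering (weakly) optimal at `s_m`
and not optimal at any `x > s_m`, and `S_m ∈ [s_m, s_m+B]` attaining the infimum of `g`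
over `[s_m, s_m+B]`, we have:
(a) the least point of `[s_m, s_m+B]` attaining the infimum of `g` over `[s_m, s_m+B]`
    is `≤ S*` for any global minimizer `S* ≥ s_m` of `g`;
(b) `g(S_m) ≤ g(x)` for every `x < S_m`;
(c) `g(s_m) > g(x)` for every `x` with `s_m < x ≤ S_m`. -/
theorem sm_Sm_properties (K B : ℝ) (hK : 0 ≤ K) (hB : 0 < B)
    (g : ℝ → ℝ) (hgc : Continuous g)
    (sm : ℝ)
    (hmono : ∀ u w : ℝ, u ≤ w → w ≤ sm → g w ≤ g u)
    (horder : K + sInf (g '' Set.Icc sm (sm + B)) - g sm ≤ 0)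
    (hnoorder : ∀ x, sm < x → 0 < K + sInf (g '' Set.Icc x (x + B)) - g x)
    (Sm : ℝ) (hSm : Sm ∈ Set.Icc sm (sm + B))
    (hSmin : ∀ y ∈ Set.Icc sm (sm + B), g Sm ≤ g y) :
    (∀ Sstar : ℝ, (∀ x : ℝ, g Sstar ≤ g x) → sm ≤ Sstar →
      sInf {y : ℝ | y ∈ Set.Icc sm (sm + B) ∧
        ∀ z ∈ Set.Icc sm (sm + B), g y ≤ g z} ≤ Sstar) ∧
    (∀ x : ℝ, x < Sm → g Sm ≤ g x) ∧
    (∀ x : ℝ, sm < x → x ≤ Sm → g x < g sm) := by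
  obtain ⟨ha, hb, hc⟩ := sm_Sm_properties_general
    (fun _ _ => (isCompact_Icc.image hgc).bddBelow) (fun u _ w hw huw => hmono u w huw hw)
    horder hnoorder hSm hSmin
  exact ⟨fun S hS => ha S fun x _ => hS x, fun x hx => hb (hx.le.trans hSm.2), hc⟩
end

section
/- Let a ≤ c be reals and let g : ℝ → ℝ satisfy g(x) ≥ g(c) for every x ∈ [a, c]. Define the quasiconvex envelope q of g on [a, c] by q(x) = sup { h(x) : h : ℝ → ℝ is quasiconvex on [a, c] and h(z) ≤ g(z) for all z ∈ [a, c] } (the supremum is well defined since the constant function g(c) is such a minorant and every minorant is bounded above by g pointwise). Then q is nonincreasing on [a, c]. -/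
/-!
A pointwise supremum of quasiconvex functions is quasiconvex, so the envelope `q` of `g` is
quasiconvex. If `g` attains its minimum at `c`, then the constant `g c` is a quasiconvex minorant
of `g`, hence `q c ≤ g c ≤ q x` and `q` is minimal at `c` as well. The sublevel set of `q` at height
`q x` is then convex and contains both `x` and `c`, so `q y ≤ q x` for every `y` between them.
-/

open Set

section Envelope

variable {𝕜 E β : Type*} [Semiring 𝕜] [PartialOrder 𝕜] [AddCommMonoid E] [SMul 𝕜 E]
  {s : Set E} {c x y : E}

theorem quasiconvexOn_const [LE β] (hs : Convex 𝕜 s) (b : β) : QuasiconvexOn 𝕜 s fun _ ↦ b :=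
  fun _ _ hx _ hy _ _ ht hu htu ↦ ⟨hs hx.1 hy.1 ht hu htu, hx.2⟩

theorem le_of_quasiconvexOn_of_isMinOn_of_mem_segment [Preorder β] {f : E → β}
    (hf : QuasiconvexOn 𝕜 s f) (hc : c ∈ s) (hmin : IsMinOn f s c) (hx : x ∈ s)
    (hy : y ∈ segment 𝕜 x c) : f y ≤ f x :=
  ((hf (f x)).segment_subset ⟨hx, le_rfl⟩ ⟨hc, hmin hx⟩ hy).2

variable [ConditionallyCompleteLattice β] {g h : E → β} {b : β}

variable (𝕜 s g) in
/-- The quasiconvex envelope of `g` on `s`: the pointwise supremum of the functions that are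
quasiconvex on `s` and lie below `g` there. Its values have the intended meaning at points of `s`,
when `s` is convex and `g` is bounded below on `s`; otherwise the supremum may be a junk value. -/
noncomputable def quasiconvexEnvelope (x : E) : β :=
  sSup {v | ∃ h : E → β, QuasiconvexOn 𝕜 s h ∧ (∀ z ∈ s, h z ≤ g z) ∧ h x = v}

theorem le_quasiconvexEnvelope (hh : QuasiconvexOn 𝕜 s h) (hhg : ∀ z ∈ s, h z ≤ g z)
    (hx : x ∈ s) : h x ≤ quasiconvexEnvelope 𝕜 s g x := by
  refine le_csSup ⟨g x, ?_⟩ ⟨h, hh, hhg, rfl⟩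
  rintro _ ⟨k, -, hkg, rfl⟩
  exact hkg x hx

theorem quasiconvexEnvelope_le (hs : Convex 𝕜 s) (hg : BddBelow (g '' s))
    (hb : ∀ h : E → β, QuasiconvexOn 𝕜 s h → (∀ z ∈ s, h z ≤ g z) → h x ≤ b) :
    quasiconvexEnvelope 𝕜 s g x ≤ b := by
  obtain ⟨m, hm⟩ := hg
  refine csSup_le ⟨m, fun _ ↦ m, quasiconvexOn_const hs m, forall_mem_image.1 hm, rfl⟩ ?_
  rintro _ ⟨h, hh, hhg, rfl⟩
  exact hb h hh hhg

theorem quasiconvexEnvelope_le_self (hs : Convex 𝕜 s) (hg : BddBelow (g '' s)) (hx : x ∈ s) :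
    quasiconvexEnvelope 𝕜 s g x ≤ g x :=
  quasiconvexEnvelope_le hs hg fun _ _ hhg ↦ hhg x hx

theorem quasiconvexOn_quasiconvexEnvelope (hs : Convex 𝕜 s) (hg : BddBelow (g '' s)) :
    QuasiconvexOn 𝕜 s (quasiconvexEnvelope 𝕜 s g) := by
  rintro r x ⟨hx, hxr⟩ y ⟨hy, hyr⟩ t u ht hu htu
  refine ⟨hs hx hy ht hu htu, quasiconvexEnvelope_le hs hg fun h hh hhg ↦ ?_⟩
  have hx_sublevel : h x ≤ r := (le_quasiconvexEnvelope hh hhg hx).trans hxr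
  have hy_sublevel : h y ≤ r := (le_quasiconvexEnvelope hh hhg hy).trans hyr
  exact (hh r ⟨hx, hx_sublevel⟩ ⟨hy, hy_sublevel⟩ ht hu htu).2

theorem isMinOn_quasiconvexEnvelope (hs : Convex 𝕜 s) (hc : c ∈ s) (hmin : IsMinOn g s c) :
    IsMinOn (quasiconvexEnvelope 𝕜 s g) s c := fun x hx ↦
  calc
    quasiconvexEnvelope 𝕜 s g c ≤ g c := quasiconvexEnvelope_le_self hs hmin.bddBelow hc
    _ ≤ quasiconvexEnvelope 𝕜 s g x :=
      le_quasiconvexEnvelope (quasiconvexOn_const hs (g c)) (isMinOn_iff.1 hmin) hx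

theorem qce_nonincreasing_general (hs : Convex 𝕜 s) (hc : c ∈ s) (hmin : IsMinOn g s c)
    (hx : x ∈ s) (hy : y ∈ segment 𝕜 x c) :
    quasiconvexEnvelope 𝕜 s g y ≤ quasiconvexEnvelope 𝕜 s g x :=
  le_of_quasiconvexOn_of_isMinOn_of_mem_segment
    (quasiconvexOn_quasiconvexEnvelope hs hmin.bddBelow) hc
    (isMinOn_quasiconvexEnvelope hs hc hmin) hx hy

end Envelope

/-- If `g(x) ≥ g(c)` on `[a, c]`, then the quasiconvex envelope `q` of `g` on `[a, c]`
(the pointwise supremum of all quasiconvex minorants of `g` on `[a, c]`) is nonincreasing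
on `[a, c]`. -/
theorem qce_nonincreasing (a c : ℝ) (hac : a ≤ c)
    (g : ℝ → ℝ) (hg : ∀ x ∈ Set.Icc a c, g c ≤ g x)
    (q : ℝ → ℝ)
    (hq : ∀ x : ℝ, q x = sSup {v : ℝ | ∃ h : ℝ → ℝ,
      QuasiconvexOn ℝ (Set.Icc a c) h ∧ (∀ z ∈ Set.Icc a c, h z ≤ g z) ∧ h x = v}) :
    ∀ x ∈ Set.Icc a c, ∀ y ∈ Set.Icc a c, x ≤ y → q y ≤ q x := by
  intro x hx y hy hxy
  obtain rfl : q = quasiconvexEnvelope ℝ (Icc a c) g := funext hq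
  exact qce_nonincreasing_general (convex_Icc a c) (right_mem_Icc.2 hac) hg hx
    (Icc_subset_segment ⟨hxy, hy.2⟩)
end

section
/- Let B > 0 and let f : ℝ → ℝ be convex on ℝ and attain a global minimum at some point S. Then the function x ↦ ( inf_{y ∈ [x, x+B]} f(y) ) − f(x) is monotone nondecreasing on ℝ. Explicitly, it equals 0 for x ≥ S, f(S) − f(x) for S − B ≤ x ≤ S, and f(x + B) − f(x) for x ≤ S − B. -/
/-!
For `t ≥ 0` the increment `x ↦ f (x + t) - f x` of a convex function is nondecreasing: if `a ≤ b`,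
then `a + t` and `b` lie between `a` and `b + t` and have the same sum. Since the function to be
studied is the infimum over `t ∈ [0, B]` of these increments, it is nondecreasing too, and no
minimizer of `f` enters this argument. A minimizer `S` splits the line into a half-line where `f` is
antitone and one where `f` is monotone, which determines where `f` is least on `[x, x + B]`.
-/

section

open Set

theorem add_le_add_of_convexOn_of_mem_segment {𝕜 E β : Type*} [Semiring 𝕜] [PartialOrder 𝕜]
    [AddCancelCommMonoid E] [Module 𝕜 E] [AddCommMonoid β] [PartialOrder β]
    [IsOrderedAddMonoid β] [Module 𝕜 β] {s : Set E} {f : E → β} {a b x y : E}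
    (hf : ConvexOn 𝕜 s f) (ha : a ∈ s) (hb : b ∈ s) (hx : x ∈ segment 𝕜 a b)
    (hxy : x + y = a + b) : f x + f y ≤ f a + f b := by
  obtain ⟨p, q, hp, hq, hpq, rfl⟩ := hx
  have hqp : q + p = 1 := by rw [add_comm, hpq]
  have hy : y = q • a + p • b := by
    apply add_left_cancel (a := p • a + q • b)
    rw [hxy, add_add_add_comm, ← add_smul, ← add_smul, hpq, hqp, one_smul, one_smul]
  calc f (p • a + q • b) + f y
      ≤ (p • f a + q • f b) + (q • f a + p • f b) :=
        add_le_add (hf.2 ha hb hp hq hpq) (hy ▸ hf.2 ha hb hq hp hqp)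
    _ = f a + f b := by
        rw [add_add_add_comm, ← add_smul, ← add_smul, hpq, hqp, one_smul, one_smul]

section LinearOrderedField

variable {𝕜 β : Type*} [Field 𝕜] [LinearOrder 𝕜] [IsStrictOrderedRing 𝕜] {s : Set 𝕜} {f : 𝕜 → β}

theorem add_sub_le_add_sub_of_convexOn [AddCommGroup β] [PartialOrder β] [IsOrderedAddMonoid β]
    [Module 𝕜 β] {a b t : 𝕜} (hf : ConvexOn 𝕜 s f) (ha : a ∈ s) (hbt : b + t ∈ s)
    (hab : a ≤ b) (ht : 0 ≤ t) : f (a + t) - f a ≤ f (b + t) - f b := by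
  have hmem : a + t ∈ segment 𝕜 a (b + t) := by
    rw [segment_eq_Icc (by linarith)]
    exact ⟨by linarith, by linarith⟩
  rw [sub_le_sub_iff, add_comm (f (b + t))]
  exact add_le_add_of_convexOn_of_mem_segment hf ha hbt hmem (by ring)

variable [Preorder β] {m : 𝕜}

theorem monotoneOn_inter_Ici_of_quasiconvexOn (hf : QuasiconvexOn 𝕜 s f) (hm : m ∈ s)
    (hmin : IsMinOn f s m) : MonotoneOn f (s ∩ Ici m) := fun _ hx y hy hxy =>
  ((hf (f y)).ordConnected.out ⟨hm, hmin hy.1⟩ ⟨hy.1, le_rfl⟩ ⟨hx.2, hxy⟩).2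

theorem antitoneOn_inter_Iic_of_quasiconvexOn (hf : QuasiconvexOn 𝕜 s f) (hm : m ∈ s)
    (hmin : IsMinOn f s m) : AntitoneOn f (s ∩ Iic m) := fun x hx _ hy hxy =>
  ((hf (f x)).ordConnected.out ⟨hx.1, le_rfl⟩ ⟨hm, hmin hx.1⟩ ⟨hxy, hy.2⟩).2

end LinearOrderedField

theorem monotone_sInf_image_Icc_sub_of_convexOn {B : ℝ} (hB : 0 ≤ B) {f : ℝ → ℝ}
    (hf : ConvexOn ℝ univ f) : Monotone fun x => sInf (f '' Icc x (x + B)) - f x := by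
  intro a b hab
  have hbdd : BddBelow (f '' Icc a (a + B)) :=
    isCompact_Icc.bddBelow_image ((hf.continuousOn isOpen_univ).mono (subset_univ _))
  suffices sInf (f '' Icc a (a + B)) - f a + f b ≤ sInf (f '' Icc b (b + B)) from
    le_sub_iff_add_le.2 this
  refine le_csInf ((nonempty_Icc.2 (by linarith)).image f) (forall_mem_image.2 fun y hy => ?_)
  obtain ⟨t, rfl⟩ : ∃ t, y = b + t := ⟨y - b, by ring⟩
  obtain ⟨ht, htB⟩ : 0 ≤ t ∧ t ≤ B := by simpa using hy
  have hInf : sInf (f '' Icc a (a + B)) ≤ f (a + t) :=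
    csInf_le hbdd (mem_image_of_mem f ⟨by linarith, by linarith⟩)
  have hincr : f (a + t) - f a ≤ f (b + t) - f b :=
    add_sub_le_add_sub_of_convexOn hf (mem_univ a) (mem_univ (b + t)) hab ht
  linarith

theorem karush_min_minus_f_general {B : ℝ} (hB : 0 ≤ B) {f : ℝ → ℝ} (hf : ConvexOn ℝ univ f) :
    Monotone (fun x => sInf (f '' Icc x (x + B)) - f x) ∧
    ∀ S : ℝ, (∀ y : ℝ, f S ≤ f y) →
      (∀ x : ℝ, S ≤ x → sInf (f '' Icc x (x + B)) - f x = 0) ∧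
      (∀ x : ℝ, S - B ≤ x → x ≤ S → sInf (f '' Icc x (x + B)) - f x = f S - f x) ∧
      (∀ x : ℝ, x ≤ S - B → sInf (f '' Icc x (x + B)) - f x = f (x + B) - f x) := by
  refine ⟨monotone_sInf_image_Icc_sub_of_convexOn hB hf, fun S hS => ?_⟩
  have hmin : IsMinOn f univ S := isMinOn_univ_iff.2 hS
  have hmono := monotoneOn_inter_Ici_of_quasiconvexOn hf.quasiconvexOn (mem_univ S) hmin
  have hanti := antitoneOn_inter_Iic_of_quasiconvexOn hf.quasiconvexOn (mem_univ S) hmin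
  rw [univ_inter] at hmono hanti
  refine ⟨fun x hx => ?right, fun x hl hr => ?middle, fun x hx => ?left⟩
  case right =>
    have hsub : Icc x (x + B) ⊆ Ici S := fun y hy => hx.trans hy.1
    rw [(hmono.mono hsub).sInf_image_Icc (by linarith), sub_self]
  case middle =>
    have hmem : S ∈ Icc x (x + B) := ⟨hr, by linarith⟩
    rw [sInf_image', (hmin.on_subset (subset_univ _)).iInf_eq hmem]
  case left =>
    have hsub : Icc x (x + B) ⊆ Iic S := fun y hy => hy.2.trans (by linarith)
    rw [(hanti.mono hsub).sInf_image_Icc (by linarith)]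

end

/-- Karush-type lemma: if `f` is convex on `ℝ` with global minimizer `S`, then
`x ↦ (inf_{y ∈ [x,x+B]} f(y)) − f(x)` is monotone nondecreasing; explicitly it equals `0`
for `x ≥ S`, `f(S) − f(x)` for `S − B ≤ x ≤ S`, and `f(x+B) − f(x)` for `x ≤ S − B`. -/
theorem karush_min_minus_f (B : ℝ) (hB : 0 < B)
    (f : ℝ → ℝ) (hf : ConvexOn ℝ Set.univ f)
    (S : ℝ) (hS : ∀ y : ℝ, f S ≤ f y) :
    Monotone (fun x => sInf (f '' Set.Icc x (x + B)) - f x) ∧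
    (∀ x : ℝ, S ≤ x → sInf (f '' Set.Icc x (x + B)) - f x = 0) ∧
    (∀ x : ℝ, S - B ≤ x → x ≤ S → sInf (f '' Set.Icc x (x + B)) - f x = f S - f x) ∧
    (∀ x : ℝ, x ≤ S - B → sInf (f '' Set.Icc x (x + B)) - f x = f (x + B) - f x) := by
  obtain ⟨hmono, hformulas⟩ := karush_min_minus_f_general hB.le hf
  exact ⟨hmono, hformulas S hS⟩
end

section
/- Let K ≥ 0, B > 0, v ∈ ℝ, and let L : ℝ → ℝ be convex on ℝ such that the function y ↦ v·y + L(y) attains a global minimum. Then the function V₁(x) = min{ 0, K + inf_{y ∈ [x, x+B]} ( v·(y − x) + L(y) ) − L(x) } is monotone nondecreasing on ℝ. -/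
/-!
Parametrize the order-up-to level as `y = x + q` with `q ∈ [0, B]`. The advantage of ordering is
then `K + inf_q (v * q + (L (x + q) - L x))`, an infimum over an interval that no longer depends on
`x`. For each `q ≥ 0` the increment `L (x + q) - L x` of the convex function `L` is nondecreasing in
`x`, and an infimum of nondecreasing functions is nondecreasing.
-/

open Set

section Convex

variable {𝕜 E β : Type*} [AddCommMonoid β] [PartialOrder β] [IsOrderedAddMonoid β]

lemma convexOn_map_add_map_swap_le [Semiring 𝕜] [PartialOrder 𝕜] [AddCommMonoid E] [SMul 𝕜 E]
    [Module 𝕜 β] {s : Set E} {f : E → β} (hf : ConvexOn 𝕜 s f) {x y : E} (hx : x ∈ s) (hy : y ∈ s)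
    {a b : 𝕜} (ha : 0 ≤ a) (hb : 0 ≤ b) (hab : a + b = 1) :
    f (a • x + b • y) + f (b • x + a • y) ≤ f x + f y :=
  calc f (a • x + b • y) + f (b • x + a • y)
      ≤ (a • f x + b • f y) + (b • f x + a • f y) :=
        add_le_add (hf.2 hx hy ha hb hab) (hf.2 hx hy hb ha (add_comm a b ▸ hab))
    _ = (a + b) • f x + (a + b) • f y := by simp only [add_smul]; abel
    _ = f x + f y := by rw [hab, one_smul, one_smul]

lemma convexOn_map_add_right_add_le [Field 𝕜] [LinearOrder 𝕜] [IsStrictOrderedRing 𝕜]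
    [Module 𝕜 β] {s : Set 𝕜} {f : 𝕜 → β} (hf : ConvexOn 𝕜 s f) {x y t : 𝕜} (hx : x ∈ s)
    (hyt : y + t ∈ s) (hxy : x ≤ y) (ht : 0 ≤ t) : f (x + t) + f y ≤ f x + f (y + t) := by
  obtain rfl | hlt := hxy.eq_or_lt
  · rw [add_comm]
  have hlen : 0 < y - x + t := add_pos_of_pos_of_nonneg (sub_pos.2 hlt) ht
  -- `x + t` and `y` are convex combinations of `x` and `y + t` with swapped weights.
  have hsum : (y - x) / (y - x + t) + t / (y - x + t) = 1 := by
    rw [← add_div, div_self hlen.ne']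
  have hleft : ((y - x) / (y - x + t)) • x + (t / (y - x + t)) • (y + t) = x + t := by
    simp only [smul_eq_mul]
    field_simp [hlen.ne']
    ring
  have hright : (t / (y - x + t)) • x + ((y - x) / (y - x + t)) • (y + t) = y := by
    simp only [smul_eq_mul]
    field_simp [hlen.ne']
    ring
  simpa only [hleft, hright] using
    convexOn_map_add_map_swap_le hf hx hyt (div_nonneg (sub_nonneg.2 hxy) hlen.le)
      (div_nonneg ht hlen.le) hsum

end Convex

lemma monotone_ciInf_sub {α ι G : Type*} [Preorder α] [Nonempty ι] [AddCommGroup G]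
    [ConditionallyCompleteLattice G] [IsOrderedAddMonoid G] {F : α → ι → G} {g : α → G}
    (hbdd : ∀ x, BddBelow (range (F x))) (hmono : ∀ i, Monotone fun x => F x i - g x) :
    Monotone fun x => (⨅ i, F x i) - g x := by
  intro x y hxy
  simp only [ciInf_sub (hbdd _)]
  exact ciInf_mono ((hbdd x).range_comp_left fun _ _ h => sub_le_sub_right h (g x))
    fun i => hmono i hxy

lemma sInf_image_Icc_add_eq_iInf {G α : Type*} [AddCommGroup G] [PartialOrder G]
    [IsOrderedAddMonoid G] [InfSet α] (f : G → α) (x b : G) :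
    sInf (f '' Icc x (x + b)) = ⨅ q : Icc 0 b, f (x + q) := by
  rw [← sInf_image' (f := fun q => f (x + q)), ← image_image f (x + ·), image_const_add_Icc,
    add_zero]

lemma bddBelow_range_add_of_isCompact {E : Type*} [TopologicalSpace E] [Add E] [ContinuousAdd E]
    {s : Set E} (hs : IsCompact s) {c L : E → ℝ} (hc : BddBelow (c '' s)) (hL : Continuous L)
    (x : E) : BddBelow (range fun q : s => c q + L (x + q)) := by
  obtain ⟨m, hm⟩ := hc
  obtain ⟨n, hn⟩ := hs.bddBelow_image (f := fun q => L (x + q)) (by fun_prop)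
  refine ⟨m + n, ?_⟩
  rintro _ ⟨q, rfl⟩
  exact add_le_add (hm (mem_image_of_mem c q.2)) (hn ⟨q, q.2, rfl⟩)

theorem V1_monotone_general (K : ℝ) {B : ℝ} (hB : 0 ≤ B) {c L : ℝ → ℝ}
    (hc : BddBelow (c '' Icc 0 B)) (hL : ConvexOn ℝ univ L) :
    Monotone fun x => min 0 (K + sInf ((fun y => c (y - x) + L y) '' Icc x (x + B)) - L x) := by
  have : Nonempty (Icc 0 B) := nonempty_Icc_subtype hB
  have hincr (q : Icc 0 B) : Monotone fun x => c q + L (x + q) - L x := fun x y hxy => by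
    have hswap := convexOn_map_add_right_add_le hL (mem_univ x) (mem_univ (y + q)) hxy q.2.1
    dsimp only
    linarith
  have hcont : Continuous L := continuousOn_univ.1 (hL.continuousOn isOpen_univ)
  have hinf : Monotone fun x => (⨅ q : Icc 0 B, (c q + L (x + q))) - L x :=
    monotone_ciInf_sub (bddBelow_range_add_of_isCompact isCompact_Icc hc hcont) hincr
  simp only [sInf_image_Icc_add_eq_iInf, add_sub_cancel_left, add_sub_assoc]
  exact monotone_const.min (hinf.const_add K)

/-- In the single-period capacitated inventory problem with fixed ordering cost `K ≥ 0`,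
unit cost `v`, capacity `B > 0`, and convex expected one-period cost `L` such that
`y ↦ v·y + L(y)` attains a global minimum, the advantage function
`V₁(x) = min{0, K + inf_{y ∈ [x,x+B]} (v·(y−x) + L(y)) − L(x)}` is monotone
nondecreasing. -/
theorem V1_monotone (K B v : ℝ) (hK : 0 ≤ K) (hB : 0 < B)
    (L : ℝ → ℝ) (hL : ConvexOn ℝ Set.univ L)
    (hmin : ∃ S : ℝ, ∀ y : ℝ, v * S + L S ≤ v * y + L y) :
    Monotone (fun x =>
      min 0 (K + sInf ((fun y => v * (y - x) + L y) '' Set.Icc x (x + B)) - L x)) :=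
  V1_monotone_general K hB.le
    (isCompact_Icc.bddBelow_image (continuous_const_mul v).continuousOn) hL
end

section
/- Let K ≥ 0, B > 0, v ∈ ℝ, m ∈ ℝ, and let g : ℝ → ℝ be continuous. Define Δ(x) = K + inf_{y ∈ [x, x+B]} g(y) − g(x), V(x) = min{0, Δ(x)}, and C(x) = −v·x + min{ g(x), K + inf_{y ∈ [x, x+B]} g(y) }. Assume g is nonincreasing on (−∞, m], Δ(x) ≤ 0 for all x ≤ m, and Δ(x) > 0 for all x > m. Then the function W(x) = min{ 0, K + inf_{y ∈ [x, x+B]} ( v·(y − x) + C(y) ) − C(x) } satisfies W(x) = V(x + B) for every x ≤ m − B and W(x) = 0 for every x > m − B; consequently, if V is monotone nondecreasing on ℝ then W is monotone nondecreasing on ℝ. -/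
/-!
Let `I x = inf_{[x, x+B]} g` and `h x = C x + v * x = min (g x) (K + I x)`. The linear terms
cancel, so `W` is formed from `h` exactly as `V` is formed from `g`. A level reached by ordering
twice, with the first order staying in `[x, x+B]`, is reachable by one order either from `x` or from
`x + B`; since `K ≥ 0`, this gives `inf_{[x, x+B]} h = min (I x) (K + I (x + B))`.

If `Δ x ≤ 0` and `g` is nonincreasing on `[x, x+B]`, then `I x = g (x + B)` and `h x = K + I x`,
which leaves `W x = V (x + B)`. If `Δ (x + B) ≥ 0`, then `I x ≤ g (x + B) ≤ K + I (x + B)`, so the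
infimum of `h` is `I x ≥ h x - K` and `W x = 0 = V (x + B)`.
-/

open Set

/-- The infimum of `g` over the inventory levels `[x, x + B]` reachable from `x` with an order
of at most `B`. It has the junk value `0` when `g` is unbounded below there. -/
noncomputable def windowInf (B : ℝ) (g : ℝ → ℝ) (x : ℝ) : ℝ :=
  sInf (g '' Icc x (x + B))

/-- The single-step advantage of the best order over not ordering at `x`, when ordering costs `K`
and being at level `y` after the decision costs `g y`: this is `V` for `g`, and `W` for
`optimalCost K B g`. -/
noncomputable def orderAdvantage (K B : ℝ) (g : ℝ → ℝ) (x : ℝ) : ℝ :=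
  min 0 (K + windowInf B g x - g x)

/-- The optimal cost at `x` with the linear term `-v * x` of `C` removed, i.e. `C x + v * x`. -/
noncomputable def optimalCost (K B : ℝ) (g : ℝ → ℝ) (x : ℝ) : ℝ :=
  min (g x) (K + windowInf B g x)

section

variable {K B c x y : ℝ} {g : ℝ → ℝ}

lemma windowInf_le (hg : BddBelow (g '' Icc x (x + B))) (hy : y ∈ Icc x (x + B)) :
    windowInf B g x ≤ g y :=
  csInf_le hg (mem_image_of_mem g hy)

lemma le_windowInf (hB : 0 ≤ B) (h : ∀ y ∈ Icc x (x + B), c ≤ g y) : c ≤ windowInf B g x :=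
  le_csInf ((nonempty_Icc.2 (le_add_of_nonneg_right hB)).image g) (forall_mem_image.2 h)

lemma windowInf_const_add (hB : 0 ≤ B) (hg : BddBelow (g '' Icc x (x + B))) (c : ℝ) :
    windowInf B (fun y => c + g y) x = c + windowInf B g x := by
  have hne : (g '' Icc x (x + B)).Nonempty :=
    (nonempty_Icc.2 (le_add_of_nonneg_right hB)).image g
  simpa only [windowInf, image_image, OrderIso.addLeft_apply] using
    ((OrderIso.addLeft c).map_csInf' hne hg).symm

lemma min_windowInf_le_windowInf (hB : 0 ≤ B) (hg : ∀ z, BddBelow (g '' Icc z (z + B)))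
    (hy : y ∈ Icc x (x + B)) :
    min (windowInf B g x) (windowInf B g (x + B)) ≤ windowInf B g y := by
  refine le_windowInf hB fun z hz => ?_
  rcases le_total z (x + B) with hzx | hxz
  · exact min_le_of_left_le (windowInf_le (hg x) ⟨hy.1.trans hz.1, hzx⟩)
  · exact min_le_of_right_le (windowInf_le (hg (x + B)) ⟨hxz, by linarith [hz.2, hy.2]⟩)

lemma isGLB_image_optimalCost (hK : 0 ≤ K) (hB : 0 ≤ B)
    (hg : ∀ z, BddBelow (g '' Icc z (z + B))) (x : ℝ) :
    IsGLB (optimalCost K B g '' Icc x (x + B))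
      (min (windowInf B g x) (K + windowInf B g (x + B))) := by
  refine ⟨forall_mem_image.2 fun y hy => le_min ?_ ?_, fun b hb => le_min ?_ ?_⟩
  · exact min_le_of_left_le (windowInf_le (hg x) hy)
  · calc min (windowInf B g x) (K + windowInf B g (x + B))
        ≤ min (K + windowInf B g x) (K + windowInf B g (x + B)) :=
          min_le_min_right _ (le_add_of_nonneg_left hK)
      _ = K + min (windowInf B g x) (windowInf B g (x + B)) := min_add_add_left ..
      _ ≤ K + windowInf B g y := by gcongr; exact min_windowInf_le_windowInf hB hg hy
  · exact le_windowInf hB fun y hy => (hb (mem_image_of_mem _ hy)).trans (min_le_left _ _)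
  · have hend : x + B ∈ Icc x (x + B) := right_mem_Icc.2 (le_add_of_nonneg_right hB)
    exact (hb (mem_image_of_mem _ hend)).trans (min_le_right _ _)

lemma windowInf_optimalCost (hK : 0 ≤ K) (hB : 0 ≤ B)
    (hg : ∀ z, BddBelow (g '' Icc z (z + B))) (x : ℝ) :
    windowInf B (optimalCost K B g) x = min (windowInf B g x) (K + windowInf B g (x + B)) :=
  (isGLB_image_optimalCost hK hB hg x).csInf_eq
    ((nonempty_Icc.2 (le_add_of_nonneg_right hB)).image _)

lemma orderAdvantage_eq_zero_iff :
    orderAdvantage K B g x = 0 ↔ g x ≤ K + windowInf B g x :=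
  min_eq_left_iff.trans sub_nonneg

lemma orderAdvantage_optimalCost_of_antitoneOn (hK : 0 ≤ K) (hB : 0 ≤ B)
    (hg : ∀ z, BddBelow (g '' Icc z (z + B))) (hanti : AntitoneOn g (Icc x (x + B)))
    (hx : K + windowInf B g x ≤ g x) :
    orderAdvantage K B (optimalCost K B g) x = orderAdvantage K B g (x + B) := by
  have hend : windowInf B g x = g (x + B) :=
    hanti.sInf_image_Icc (le_add_of_nonneg_right hB)
  have hcost : optimalCost K B g x = K + g (x + B) := by
    rw [optimalCost, min_eq_right hx, hend]
  calc orderAdvantage K B (optimalCost K B g) x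
      = min 0 (K + min (g (x + B)) (K + windowInf B g (x + B)) - (K + g (x + B))) := by
        rw [orderAdvantage, windowInf_optimalCost hK hB hg, hcost, hend]
    _ = min 0 (min 0 (K + windowInf B g (x + B) - g (x + B))) := by
        rw [add_sub_add_left_eq_sub, ← min_sub_sub_right, sub_self]
    _ = orderAdvantage K B g (x + B) := by rw [← min_assoc, min_self, orderAdvantage]

lemma orderAdvantage_optimalCost_eq_zero (hK : 0 ≤ K) (hB : 0 ≤ B)
    (hg : ∀ z, BddBelow (g '' Icc z (z + B)))
    (hx : g (x + B) ≤ K + windowInf B g (x + B)) :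
    orderAdvantage K B (optimalCost K B g) x = 0 := by
  have hend : windowInf B g x ≤ g (x + B) :=
    windowInf_le (hg x) (right_mem_Icc.2 (le_add_of_nonneg_right hB))
  rw [orderAdvantage_eq_zero_iff, windowInf_optimalCost hK hB hg, min_eq_left (hend.trans hx)]
  exact min_le_right _ _

lemma min_zero_eq_orderAdvantage_optimalCost (hK : 0 ≤ K) (hB : 0 ≤ B)
    (hg : ∀ z, BddBelow (g '' Icc z (z + B))) {v : ℝ} {C : ℝ → ℝ}
    (hC : ∀ y, C y = -v * y + optimalCost K B g y) (x : ℝ) :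
    min 0 (K + sInf ((fun y => v * (y - x) + C y) '' Icc x (x + B)) - C x) =
      orderAdvantage K B (optimalCost K B g) x := by
  have hcancel : (fun y => v * (y - x) + C y) = fun y => -v * x + optimalCost K B g y := by
    funext y
    rw [hC]
    ring
  have hbdd : BddBelow (optimalCost K B g '' Icc x (x + B)) :=
    (isGLB_image_optimalCost hK hB hg x).bddBelow
  rw [hcancel, ← windowInf, windowInf_const_add hB hbdd, hC, orderAdvantage]
  congr 1
  ring

end

theorem W_piecewise_general (K B v m : ℝ) (hK : 0 ≤ K) (hB : 0 ≤ B)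
    (g : ℝ → ℝ) (hg : ∀ x, BddBelow (g '' Icc x (x + B)))
    (Δ V C W : ℝ → ℝ)
    (hΔ : ∀ x, Δ x = K + sInf (g '' Icc x (x + B)) - g x)
    (hV : ∀ x, V x = min 0 (Δ x))
    (hC : ∀ x, C x = -v * x + min (g x) (K + sInf (g '' Icc x (x + B))))
    (hW : ∀ x, W x = min 0 (K + sInf ((fun y => v * (y - x) + C y) '' Icc x (x + B)) - C x))
    (hanti : AntitoneOn g (Iic m))
    (hord : ∀ x ≤ m - B, Δ x ≤ 0)
    (hnoord : ∀ x, m < x → 0 ≤ Δ x) :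
    (∀ x ≤ m - B, W x = V (x + B)) ∧ (∀ x, m - B < x → W x = 0) ∧ (Monotone V → Monotone W) := by
  have hV' (x : ℝ) : V x = orderAdvantage K B g x := by rw [hV, hΔ, orderAdvantage, windowInf]
  have hW' (x : ℝ) : W x = orderAdvantage K B (optimalCost K B g) x :=
    (hW x).trans (min_zero_eq_orderAdvantage_optimalCost hK hB hg hC x)
  have low : ∀ x ≤ m - B, W x = V (x + B) := fun x hx => by
    have hsub : Icc x (x + B) ⊆ Iic m := fun y hy => hy.2.trans (le_sub_iff_add_le.1 hx)
    rw [hW', hV']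
    exact orderAdvantage_optimalCost_of_antitoneOn hK hB hg (hanti.mono hsub)
      (sub_nonpos.1 (hΔ x ▸ hord x hx))
  have high : ∀ x, m - B < x → W x = 0 := fun x hx => by
    rw [hW']
    exact orderAdvantage_optimalCost_eq_zero hK hB hg
      (sub_nonneg.1 (hΔ (x + B) ▸ hnoord (x + B) (sub_lt_iff_lt_add.1 hx)))
  have shift (x : ℝ) : W x = V (x + B) := by
    rcases le_or_gt x (m - B) with hx | hx
    · exact low x hx
    · rw [high x hx, hV, min_eq_left (hnoord _ (sub_lt_iff_lt_add.1 hx))]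
  refine ⟨low, high, fun hmonoV x y hxy => ?_⟩
  rw [shift x, shift y]
  exact hmonoV (by gcongr)

/-- Piecewise identity for the single-step advantage function: with `g` continuous,
nonincreasing on `(−∞, m]`, `Δ(x) = K + inf_{y ∈ [x,x+B]} g(y) − g(x) ≤ 0` for `x ≤ m`
and `Δ(x) > 0` for `x > m`, `V(x) = min{0, Δ(x)}`, and
`C(x) = −v·x + min{g(x), K + inf_{y ∈ [x,x+B]} g(y)}`, the function
`W(x) = min{0, K + inf_{y ∈ [x,x+B]} (v·(y−x) + C(y)) − C(x)}` satisfies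
`W(x) = V(x+B)` for `x ≤ m − B` and `W(x) = 0` for `x > m − B`; consequently, if `V` is
monotone nondecreasing then so is `W`. -/
theorem W_piecewise (K B v m : ℝ) (hK : 0 ≤ K) (hB : 0 < B)
    (g : ℝ → ℝ) (hgc : Continuous g)
    (Δ V C W : ℝ → ℝ)
    (hΔ : ∀ x : ℝ, Δ x = K + sInf (g '' Set.Icc x (x + B)) - g x)
    (hV : ∀ x : ℝ, V x = min 0 (Δ x))
    (hC : ∀ x : ℝ, C x = -v * x + min (g x) (K + sInf (g '' Set.Icc x (x + B))))
    (hW : ∀ x : ℝ, W x = min 0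
      (K + sInf ((fun y => v * (y - x) + C y) '' Set.Icc x (x + B)) - C x))
    (hmono : ∀ u w : ℝ, u ≤ w → w ≤ m → g w ≤ g u)
    (hord : ∀ x ≤ m, Δ x ≤ 0)
    (hnoord : ∀ x : ℝ, m < x → 0 < Δ x) :
    (∀ x ≤ m - B, W x = V (x + B)) ∧
    (∀ x : ℝ, m - B < x → W x = 0) ∧
    (Monotone V → Monotone W) := by
  exact W_piecewise_general K B v m hK hB.le g (fun _ => (isCompact_Icc.image hgc).bddBelow) Δ V C W
    hΔ hV hC hW (fun u _ w hw huw => hmono u w huw hw) (fun x hx => hord x (by linarith))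
    (fun x hx => (hnoord x hx).le)
end
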